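/- Assume a is not a norm from L, and assume E = F(s) where s ∈ E satisfies s² = −d for some d ∈ F and s ∉ F. If g = g(l0,l1,l2) is special unitary and α(g) = g or α(g) = −g, then (l0,l1,l2) = (1,0,0), i.e. g is the identity matrix. In other words, the special unitary elements contain no nontrivial hermitian or skew-hermitian element. -/

import Mathlib

/-!
The matrices `gmat r a l0 l1 l2` form the cyclic algebra `D = L ⊕ Lz ⊕ Lz²` with `z³ = a`, and the
unitary conditions say exactly that `g * α(g) = 1`. So `α(g) = ε g` with `ε = ±1` forces
`g * g = ε` (`gmat_mul_self`). Since the determinant of `g` is `1`, comparing determinants of the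
`3 × 3` matrices gives `1 = ε³ = ε`, which excludes the skew case. In the hermitian case
`(g - 1) * (g + 1) = 0`; as `a` is not a norm, `D` is a division algebra, in the form that a
nonzero element has nonzero determinant (`eq_zero_of_det_eq_zero`), so `g = 1` or `g = -1`, and
`det (-1) = -1 ≠ 1`.

For the division property, let `x` be the first row of a matrix in `D`; the other rows are `z x`
and `z² x`. If `z x = c x`, then `a x = z³ x = N(c) x`, so `a = N(c)`. If instead
`z² x = p x + q z x` with `x`, `z x` independent, applying `z` once more gives `a = p ρ(q)` and
`ρ(p) = -q ρ(q)`, so `a = N(-q)`.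
-/

open Matrix NumberField IsDedekindDomain

noncomputable section

section Defs

variable {L : Type*} [Field L]

/-- The matrix `g(l0,l1,l2)` of the cyclic presentation `D = L ⊕ Lz ⊕ Lz²`. -/
def gmat (ρ : L → L) (a l0 l1 l2 : L) : Matrix (Fin 3) (Fin 3) L :=
  !![l0, l1, l2;
     a * ρ l2, ρ l0, ρ l1;
     a * ρ (ρ l1), a * ρ (ρ l2), ρ (ρ l0)]

/-- The norm `N_{L/E}(x) = x·ρ(x)·ρ²(x)`. -/
def NormLE (ρ : L → L) (x : L) : L := x * ρ x * ρ (ρ x)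

/-- The trace `Tr_{L/E}(x) = x + ρ(x) + ρ²(x)`. -/
def TrLE (ρ : L → L) (x : L) : L := x + ρ x + ρ (ρ x)

/-- The unitary conditions (U1) and (U2) on the coefficients `(l0,l1,l2)`. -/
def IsUnitaryCoeffs (ρ τ : L → L) (a b l0 l1 l2 : L) : Prop :=
  l0 * τ l0 + ρ b * (l1 * τ l1) + ρ b * ρ (ρ b) * (l2 * τ l2) = 1 ∧
  a * τ l0 * ρ l2 + ρ b * τ l1 * ρ l0 + ρ b * ρ (ρ b) * τ l2 * ρ l1 = 0

/-- The unitary conditions together with the determinant condition (Det). -/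
def IsSpecialUnitaryCoeffs (ρ τ : L → L) (a b l0 l1 l2 : L) : Prop :=
  IsUnitaryCoeffs ρ τ a b l0 l1 l2 ∧
  NormLE ρ l0 + a * NormLE ρ l1 + a ^ 2 * NormLE ρ l2
    - a * TrLE ρ (l0 * ρ l1 * ρ (ρ l2)) = 1

/-- The involution of the second kind, on coefficients, realized as a matrix:
`α(g(l0,l1,l2)) = g(τ l0, a⁻¹·b·ρ²(b)·ρ(τ l2), a⁻¹·b·ρ²(τ l1))`. -/
def alphaMat (ρ τ : L → L) (a b l0 l1 l2 : L) : Matrix (Fin 3) (Fin 3) L :=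
  gmat ρ a (τ l0) (a⁻¹ * b * ρ (ρ b) * ρ (τ l2)) (a⁻¹ * b * ρ (ρ (τ l1)))

end Defs

section CyclicAlgebra

variable {L : Type*} [Field L]

/-- If `z x = c x` for a nonzero `x = l0 + l1 z + l2 z²`, then `a` is the norm of `c`. -/
lemma norm_eq_of_eigen (r : L →+* L) (hr : ∀ x, r (r (r x)) = x) {a l0 l1 l2 c : L}
    (ha : a ≠ 0) (h0 : a * r l2 = c * l0) (h1 : r l0 = c * l1)
    (h2 : r l1 = c * l2) (hne : ¬ (l0 = 0 ∧ l1 = 0 ∧ l2 = 0)) : NormLE r c = a := by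
  have key0 : (NormLE r c - a) * l0 = 0 := by
    have e1 := congrArg r h1
    have e2 := congrArg r e1
    simp only [map_mul, hr, h2] at e1 e2
    unfold NormLE
    linear_combination (-a) * e2 - r c * r (r c) * h0
  by_cases hl0 : l0 = 0
  · exfalso
    subst hl0
    have hl2 : l2 = 0 := by simpa [ha] using h0
    have hl1 : l1 = 0 := by simpa [hl2] using h2
    exact hne ⟨rfl, hl1, hl2⟩
  · exact sub_eq_zero.mp ((mul_eq_zero.mp key0).resolve_right hl0)

/-- The cyclic algebra is a division algebra when `a` is not a norm: its nonzero elements are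
nonsingular matrices. -/
lemma eq_zero_of_det_eq_zero (r : L →+* L) (hr : ∀ x, r (r (r x)) = x) {a : L} (ha : a ≠ 0)
    (haE : r a = a) (hnn : ¬ ∃ x, NormLE r x = a) (l0 l1 l2 : L)
    (hdet : (gmat r a l0 l1 l2).det = 0) : l0 = 0 ∧ l1 = 0 ∧ l2 = 0 := by
  by_contra hne
  obtain ⟨v, hv, hvg⟩ := Matrix.exists_vecMul_eq_zero_iff.mpr hdet
  have e0 := congrFun hvg 0
  have e1 := congrFun hvg 1
  have e2 := congrFun hvg 2
  simp [gmat, Matrix.vecMul, dotProduct, Fin.sum_univ_three] at e0 e1 e2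
  -- A relation between `x` and `z x` either is trivial or exhibits `a` as a norm.
  have dep : ∀ p q : L, p * l0 + q * (a * r l2) = 0 → p * l1 + q * r l0 = 0 →
      p * l2 + q * r l1 = 0 → q = 0 ∧ p = 0 := by
    intro p q f0 f1 f2
    by_cases hq : q = 0
    · refine ⟨hq, ?_⟩
      subst hq
      by_contra hp
      simp [hp] at f0 f1 f2
      exact hne ⟨f0, f1, f2⟩
    · refine absurd ⟨-p / q, norm_eq_of_eigen r hr ha ?_ ?_ ?_ hne⟩ hnn
      · field_simp; linear_combination f0
      · field_simp; linear_combination f1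
      · field_simp; linear_combination f2
  by_cases hv2 : v 2 = 0
  · simp only [hv2, zero_mul, add_zero] at e0 e1 e2
    obtain ⟨h1, h0⟩ := dep _ _ e0 e1 e2
    apply hv
    ext i
    fin_cases i <;> simp [h0, h1, hv2]
  · obtain ⟨p, hp⟩ : ∃ p, p = - v 0 / v 2 := ⟨_, rfl⟩
    obtain ⟨q, hq⟩ : ∃ q, q = - v 1 / v 2 := ⟨_, rfl⟩
    have g0 : a * r (r l1) = p * l0 + q * (a * r l2) := by
      rw [hp, hq]; field_simp; linear_combination e0
    have g1 : a * r (r l2) = p * l1 + q * r l0 := by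
      rw [hp, hq]; field_simp; linear_combination e1
    have g2 : r (r l0) = p * l2 + q * r l1 := by
      rw [hp, hq]; field_simp; linear_combination e2
    -- Applying `z` to `z² x = p x + q z x`.
    have k0 := congrArg r g0
    have k1 := congrArg r g1
    have k2 := congrArg r g2
    simp only [map_mul, map_add, hr, haE] at k0 k1 k2
    obtain ⟨hz1, hz2⟩ := dep (r q * p - a) (r p + r q * q)
      (by linear_combination (-a) * k2 - r q * g0)
      (by linear_combination (-1) * k0 - r q * g1)
      (by linear_combination (-1) * k1 - r q * g2)
    have hz3 := congrArg r (congrArg r hz1)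
    simp only [map_mul, map_add, hr, map_zero] at hz3
    refine hnn ⟨-q, ?_⟩
    unfold NormLE
    simp only [map_neg]
    linear_combination hz2 - r q * hz3

lemma det_gmat (r : L →+* L) (hr : ∀ x, r (r (r x)) = x) (a l0 l1 l2 : L) :
    (gmat r a l0 l1 l2).det =
      NormLE r l0 + a * NormLE r l1 + a ^ 2 * NormLE r l2
        - a * TrLE r (l0 * r l1 * r (r l2)) := by
  simp only [gmat, Matrix.det_fin_three, NormLE, TrLE, map_mul, hr]
  simp
  ring

/-- A unitary `g` with `α(g) = ε g`, `ε = ±1`, satisfies `g * g = ε`. The hypotheses `h0`, `h1`,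
`h2` are the coefficientwise form of `α(g) = ε g`. -/
lemma gmat_mul_self (r t : L →+* L) (hr : ∀ x, r (r (r x)) = x) (hrt : ∀ x, t (r x) = r (t x))
    {a b l0 l1 l2 ε : L} (ha : a ≠ 0) (hb : b ≠ 0) (haE : r a = a)
    (hε : ε = 1 ∨ ε = -1)
    (hU : IsUnitaryCoeffs r t a b l0 l1 l2) (h0 : t l0 = ε * l0)
    (h1 : a⁻¹ * b * r (r b) * r (t l2) = ε * l1) (h2 : a⁻¹ * b * r (r (t l1)) = ε * l2) :
    gmat r a l0 l1 l2 * gmat r a l0 l1 l2 = ε • (1 : Matrix (Fin 3) (Fin 3) L) := by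
  obtain ⟨u1, u2⟩ := hU
  have hεε : ε * ε = 1 := by rcases hε with h | h <;> rw [h] <;> ring
  have hrε : r ε = ε := by rcases hε with h | h <;> simp [h]
  have hε0 : ε ≠ 0 := by rintro rfl; simp at hεε
  have hrb : r b ≠ 0 := by simpa using hb
  have hrrb : r (r b) ≠ 0 := by simpa using hb
  have h1' : b * r (r b) * r (t l2) = a * (ε * l1) := by
    rw [← h1]; field_simp
  have h2' : b * r (r (t l1)) = a * (ε * l2) := by
    rw [← h2]; field_simp
  have t1 : r b * t l1 = a * (ε * r l2) := by
    have := congrArg r h2'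
    simpa only [map_mul, hr, haE, hrε] using this
  have t2 : r b * r (r b) * t l2 = a * (ε * r (r l1)) := by
    have := congrArg r (congrArg r h1')
    simp only [map_mul, hr, haE, hrε] at this
    linear_combination this
  have x0 : l0 * l0 + a * l1 * r l2 + a * l2 * r (r l1) = ε := by
    linear_combination ε * u1 - ε * l0 * h0 - ε * l1 * t1 - ε * l2 * t2
      - (l0 * l0 + a * l1 * r l2 + a * l2 * r (r l1)) * hεε
  have y0 : l0 * r l2 + r l2 * r l0 + r l1 * r (r l1) = 0 := by
    have : a * ε * (l0 * r l2 + r l2 * r l0 + r l1 * r (r l1)) = 0 := by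
      linear_combination u2 - a * r l2 * h0 - r l0 * t1 - r l1 * t2
    simpa [ha, hε0] using this
  have y1 : l0 * l2 + l1 * r l1 + l2 * r (r l0) = 0 := by
    have := congrArg r (congrArg r y0)
    simp only [map_mul, map_add, hr, map_zero] at this
    linear_combination this
  -- The remaining entry vanishes by applying `t` to the second unitarity condition.
  have w0 : l0 * l1 + l1 * r l0 + a * l2 * r (r l2) = 0 := by
    have hy := congrArg t y0
    simp only [map_mul, map_add, hrt, map_zero, h0, hrε] at hy
    have s1 : r (r b) * r (t l1) = a * (ε * r (r l2)) := by
      have := congrArg r t1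
      simpa only [map_mul, hr, haE, hrε] using this
    have : a * (l0 * l1 + l1 * r l0 + a * l2 * r (r l2)) = 0 := by
      linear_combination b * r (r b) * hy - ε * (l0 + r l0) * h1' - b * r (r (t l1)) * s1
        - a * ε * r (r l2) * h2' - (a * l1 * (l0 + r l0) + a * a * l2 * r (r l2)) * hεε
    simpa [ha] using this
  have rx := congrArg r x0
  have rrx := congrArg r rx
  have ry := congrArg r y1
  have rry := congrArg r ry
  have rw0 := congrArg r w0
  have rrw := congrArg r rw0
  simp only [map_mul, map_add, hr, map_zero, haE, hrε] at rx rrx ry rry rw0 rrw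
  ext i j
  fin_cases i <;> fin_cases j <;>
    simp [gmat, Matrix.mul_apply, Fin.sum_univ_three]
  · linear_combination x0
  · linear_combination w0
  · linear_combination y1
  · linear_combination a * ry
  · linear_combination rx
  · linear_combination rw0
  · linear_combination a * rrw
  · linear_combination a * rry
  · linear_combination rrx

end CyclicAlgebra


theorem stmt_9
    {F L : Type*} [Field F] [NumberField F] [Field L] [NumberField L]
    [Algebra F L] [IsGalois F L] [FiniteDimensional F L]
    (σ : L ≃ₐ[F] L) (hgen : ∀ g : L ≃ₐ[F] L, g ∈ Subgroup.zpowers σ)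
    (hord : orderOf σ = 6)
    (ρ τ : L → L) (hρ : ∀ x, ρ x = (σ ^ 2) x) (hτ : ∀ x, τ x = (σ ^ 3) x)
    (a b : L) (ha : a ≠ 0) (hb : b ≠ 0)
    (haE : ρ a = a) (hbM : τ b = b)
    (hab : a * τ a = b * ρ b * ρ (ρ b))
    (hnn : ¬∃ x : L, NormLE ρ x = a)
    (s : L) (d : F) (hsE : ρ s = s) (hs2 : s ^ 2 = -algebraMap F L d)
    (hsF : s ∉ Set.range (algebraMap F L)) :
    ∀ l0 l1 l2 : L, IsSpecialUnitaryCoeffs ρ τ a b l0 l1 l2 →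
      (alphaMat ρ τ a b l0 l1 l2 = gmat ρ a l0 l1 l2 ∨
        alphaMat ρ τ a b l0 l1 l2 = -gmat ρ a l0 l1 l2) →
      l0 = 1 ∧ l1 = 0 ∧ l2 = 0 := by
  obtain ⟨r, rfl⟩ : ∃ r : L →+* L, ρ = ⇑r :=
    ⟨((σ ^ 2 : L ≃ₐ[F] L) : L →+* L), funext fun x => by simpa using hρ x⟩
  obtain ⟨t, rfl⟩ : ∃ t : L →+* L, τ = ⇑t :=
    ⟨((σ ^ 3 : L ≃ₐ[F] L) : L →+* L), funext fun x => by simpa using hτ x⟩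
  have h6 : σ ^ 6 = 1 := hord ▸ pow_orderOf_eq_one σ
  have hr : ∀ x, r (r (r x)) = x := fun x => by
    rw [hρ, hρ, hρ, ← AlgEquiv.mul_apply, ← AlgEquiv.mul_apply, ← pow_add, ← pow_add, h6]; rfl
  have hrt : ∀ x, t (r x) = r (t x) := fun x => by
    rw [hτ, hρ, hρ, hτ, ← AlgEquiv.mul_apply, ← AlgEquiv.mul_apply, ← pow_add, ← pow_add]
  intro l0 l1 l2 hSU hα
  obtain ⟨hU, hD⟩ := hSU
  rw [← det_gmat r hr] at hD
  obtain ⟨ε, hε, hαε⟩ : ∃ ε : L, (ε = 1 ∨ ε = -1) ∧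
      alphaMat r t a b l0 l1 l2 = ε • gmat r a l0 l1 l2 := by
    rcases hα with h | h
    · exact ⟨1, Or.inl rfl, by rw [h, one_smul]⟩
    · exact ⟨-1, Or.inr rfl, by rw [h, neg_one_smul]⟩
  have c0 := congrFun (congrFun hαε 0) 0
  have c1 := congrFun (congrFun hαε 0) 1
  have c2 := congrFun (congrFun hαε 0) 2
  simp only [alphaMat, gmat, Matrix.smul_apply, smul_eq_mul, Matrix.of_apply, Matrix.cons_val]
    at c0 c1 c2
  have hsq := gmat_mul_self r t hr hrt ha hb haE hε hU c0 c1 c2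
  have hε1 : ε = 1 := by
    rcases hε with h | h
    · exact h
    · have := congrArg Matrix.det hsq
      rw [Matrix.det_mul, hD, Matrix.det_smul, Matrix.det_one, h] at this
      norm_num at this
  rw [hε1, one_smul] at hsq
  have hsub : gmat r a (l0 - 1) l1 l2 = gmat r a l0 l1 l2 - 1 := by
    ext i j; fin_cases i <;> fin_cases j <;> simp [gmat]
  have hadd : gmat r a (l0 + 1) l1 l2 = gmat r a l0 l1 l2 + 1 := by
    ext i j; fin_cases i <;> fin_cases j <;> simp [gmat]
  have hprod : gmat r a (l0 - 1) l1 l2 * gmat r a (l0 + 1) l1 l2 = 0 := by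
    rw [hsub, hadd, sub_mul, mul_add, hsq, one_mul, mul_one, add_comm, sub_self]
  have hdet := congrArg Matrix.det hprod
  rw [Matrix.det_mul, Matrix.det_zero] at hdet
  rcases mul_eq_zero.mp hdet with h | h
  · obtain ⟨k0, k1, k2⟩ := eq_zero_of_det_eq_zero r hr ha haE hnn _ _ _ h
    exact ⟨sub_eq_zero.mp k0, k1, k2⟩
  · obtain ⟨k0, k1, k2⟩ := eq_zero_of_det_eq_zero r hr ha haE hnn _ _ _ h
    rw [det_gmat r hr, eq_neg_of_add_eq_zero_left k0, k1, k2] at hD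
    simp [NormLE, TrLE] at hD
    norm_num at hD
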